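/- Let −1 ≤ B < A ≤ 1 and let f ∈ N_{k,c}^α(λ, μ, (1+Az)/(1+Bz)) with k, λ real, λ ≠ 0, μk/λ > 0 (and S_{k}^c f(z)/z, S_{k+1}^c f(z)/z nonvanishing on E). Then for all z ∈ E with |z| = r < 1: L(r) ≤ |(1/cos α)·{e^{iα}(z/S_{k+1}^c f(z))^μ − i sin α}| ≤ U(r), where for B ≠ 0, L(r) = A/B + (1 − A/B)·₂F₁(1, μk/λ, μk/λ + 1; Br) and U(r) = A/B + (1 − A/B)·₂F₁(1, μk/λ, μk/λ + 1; −Br), and for B = 0, L(r) = 1 − (μk/(μk+λ))A and U(r) = 1 + (μk/(μk+λ))A. -/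

import Mathlib

open Complex Set

noncomputable section

/-- The open unit disk in ℂ. -/
def unitDisk : Set ℂ := Metric.ball 0 1

/-- Pochhammer symbol `(x)_n = x (x+1) ⋯ (x+n-1)`. -/
def poch (x : ℂ) (n : ℕ) : ℂ := ∏ i ∈ Finset.range n, (x + i)

/-- `k` is not a nonpositive integer `0, -1, -2, …`. -/
def NotNonposInt (k : ℂ) : Prop := ∀ n : ℕ, k ≠ -(n : ℂ)

/-- `a` is the coefficient sequence of a function `f(z) = z + ∑_{n≥2} a_n z^n`
in the class `A` of normalized analytic functions on the unit disk. -/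
def InA (a : ℕ → ℂ) : Prop :=
  a 0 = 0 ∧ a 1 = 1 ∧ ∀ z ∈ unitDisk, Summable fun n => a n * z ^ n

/-- The generalized Struve convolution operator `S_k^c` applied to
`f(z) = z + ∑_{n≥2} a_n z^n`, namely
`S_k^c f(z) = z + ∑_{n≥1} (-c/4)^n a_{n+1} z^{n+1} / ((3/2)_n (k)_n)`. -/
def struveOp (k c : ℂ) (a : ℕ → ℂ) (z : ℂ) : ℂ :=
  z + ∑' n : ℕ,
    (-c / 4) ^ (n + 1) / (poch (3 / 2) (n + 1) * poch k (n + 1)) * a (n + 2) * z ^ (n + 2)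

/-- Subordination of analytic functions on the unit disk. -/
def Subord (f g : ℂ → ℂ) : Prop :=
  ∃ w : ℂ → ℂ, AnalyticOnNhd ℂ w unitDisk ∧ w 0 = 0 ∧ (∀ z ∈ unitDisk, ‖w z‖ < 1) ∧
    ∀ z ∈ unitDisk, f z = g (w z)

/-- `(z / F z) ^ μ` (principal branch), with the removable singularity at `z = 0`
filled in with the value `1`. -/
def ratioPow (μ : ℝ) (F : ℂ → ℂ) (z : ℂ) : ℂ :=
  (if z = 0 then 1 else z / F z) ^ (μ : ℂ)

/-- `F z / G z`, with the removable singularity at `z = 0` filled in with value `1`. -/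
def ratioQ (F G : ℂ → ℂ) (z : ℂ) : ℂ := if z = 0 then 1 else F z / G z

/-- The expression
`e^{iα} {(1+λ)(z/S_{k+1}f)^μ − λ (S_k f/S_{k+1} f)(z/S_{k+1} f)^μ}`. -/
def Jfun (α : ℝ) (lam : ℂ) (μ : ℝ) (Sk Sk1 : ℂ → ℂ) (z : ℂ) : ℂ :=
  exp (α * I) * ((1 + lam) * ratioPow μ Sk1 z - lam * ratioQ Sk Sk1 z * ratioPow μ Sk1 z)

/-- Membership `f ∈ N_{k,c}^α(λ, μ, φ)` for `f(z) = z + ∑_{n≥2} a_n z^n`. -/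
def memN (α : ℝ) (lam : ℂ) (μ : ℝ) (k c : ℂ) (φ : ℂ → ℂ) (a : ℕ → ℂ) : Prop :=
  Subord (Jfun α lam μ (struveOp k c a) (struveOp (k + 1) c a))
    (fun z => (Real.cos α : ℂ) * φ z + (Real.sin α : ℂ) * I)

/-- `φ` is convex univalent on the unit disk. -/
def ConvexUnivalent (φ : ℂ → ℂ) : Prop :=
  AnalyticOnNhd ℂ φ unitDisk ∧ InjOn φ unitDisk ∧ Convex ℝ (φ '' unitDisk)

/-- `F z / z` is nonvanishing on the unit disk. -/
def Nonvan (F : ℂ → ℂ) : Prop := ∀ z ∈ unitDisk, z ≠ 0 → F z ≠ 0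

/-- The Gaussian hypergeometric function `₂F₁(a,b,c;z)` (as a series). -/
def hyp2F1 (a b c z : ℂ) : ℂ :=
  ∑' n : ℕ, poch a n * poch b n / (poch c n * (n.factorial : ℂ)) * z ^ n
/-- Lower bound `L(r)`: `A/B + (1-A/B) ₂F₁(1, μk/λ, μk/λ+1; Br)` for `B ≠ 0`,
and `1 - (μk/(μk+λ)) A` for `B = 0`. -/
def lowerBdR (A B μ k lam r : ℝ) : ℝ :=
  if B = 0 then 1 - μ * k / (μ * k + lam) * A
  else A / B + (1 - A / B) *
    (hyp2F1 1 ((μ * k / lam : ℝ) : ℂ) (((μ * k / lam : ℝ) : ℂ) + 1) ((B * r : ℝ) : ℂ)).re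

/-- Upper bound `U(r)`: `A/B + (1-A/B) ₂F₁(1, μk/λ, μk/λ+1; -Br)` for `B ≠ 0`,
and `1 + (μk/(μk+λ)) A` for `B = 0`. -/
def upperBdR (A B μ k lam r : ℝ) : ℝ :=
  if B = 0 then 1 + μ * k / (μ * k + lam) * A
  else A / B + (1 - A / B) *
    (hyp2F1 1 ((μ * k / lam : ℝ) : ℂ) (((μ * k / lam : ℝ) : ℂ) + 1) (-((B * r : ℝ) : ℂ))).re

/-!
Write `S_k^c f(z) / z` as a power series `F_k`. The recursion `(k + n) / (k + 1)_n = k / (k)_n` says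
that `k F_{k+1} + z F_{k+1}' = k F_k`, and therefore, with `γ = μ k / λ`, the normalized function
`p = (e^{iα} F_{k+1}^{-μ} - i sin α) / cos α` satisfies `γ p + z p' = γ φ(w(z))` as soon as it is
differentiable, where `|w(z)| ≤ |z|` by the Schwarz lemma.

Differentiability needs `F_{k+1}⁻¹` to avoid the cut of the principal power. Subordination makes
`F_{k+1}^{-μ} (1 + λ - λ F_k / F_{k+1})` continuous; where `F_{k+1}⁻¹` meets the cut, this forces
the second factor to vanish. By the open mapping theorem such points accumulate, so the second
factor would vanish identically, whereas its value at `0` is `1`.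

For `φ(w) = (1 + A w) / (1 + B w)`, the disk `|w| ≤ s` is mapped into the disk with diameter
`[φ(-s), φ(s)]`. Comparing `p` along rays, by means of the integrating factor `t^(γ-1)`, with the
real solution of `γ q + x q' = γ φ(x)` bounds `Re p(z)` below by `q(-|z|)` and `|p(z)|` above by
`q(|z|)`; expanding in power series, `q` is the hypergeometric expression in the theorem.
-/

open Filter Topology Metric

/-- `p` solves the first-order Euler (Briot–Bouquet) equation `γ p(z) + z p'(z) = γ g(z)` at every
point of `s`. The derivative is a two-sided one, also at boundary points of `s`. -/
def SolvesEulerOn {𝕜 : Type*} [NontriviallyNormedField 𝕜] (γ : 𝕜) (p g : 𝕜 → 𝕜) (s : Set 𝕜) :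
    Prop :=
  ∀ z ∈ s, ∃ p', HasDerivAt p p' z ∧ γ * p z + z * p' = γ * g z

namespace SolvesEulerOn

section NormedField

variable {𝕜 : Type*} [NontriviallyNormedField 𝕜] {γ : 𝕜} {p q g h : 𝕜 → 𝕜} {s t : Set 𝕜}

lemma mono (hp : SolvesEulerOn γ p g s) (hts : t ⊆ s) : SolvesEulerOn γ p g t :=
  fun z hz => hp z (hts hz)

lemma differentiableOn (hp : SolvesEulerOn γ p g s) : DifferentiableOn 𝕜 p s := fun z hz =>
  let ⟨_, hp', _⟩ := hp z hz
  hp'.differentiableAt.differentiableWithinAt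

lemma congr_right (hp : SolvesEulerOn γ p g s) (hgh : EqOn g h s) : SolvesEulerOn γ p h s :=
  fun z hz => hgh hz ▸ hp z hz

lemma congr_left (hp : SolvesEulerOn γ p g s) (hs : IsOpen s) (hqp : EqOn q p s) :
    SolvesEulerOn γ q g s := fun z hz => by
  obtain ⟨p', hp', heq⟩ := hp z hz
  exact ⟨p', hp'.congr_of_eventuallyEq (hqp.eventuallyEq_of_mem (hs.mem_nhds hz)),
    by rw [hqp hz, heq]⟩

lemma const_mul_add_const (hp : SolvesEulerOn γ p g s) (u v : 𝕜) :
    SolvesEulerOn γ (fun z => u * p z + v) (fun z => u * g z + v) s := fun z hz => by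
  obtain ⟨p', hp', heq⟩ := hp z hz
  exact ⟨u * p', (hp'.const_mul u).add_const v, by linear_combination u * heq⟩

lemma sub (hp : SolvesEulerOn γ p g s) (hq : SolvesEulerOn γ q h s) :
    SolvesEulerOn γ (p - q) (g - h) s := fun z hz => by
  obtain ⟨p', hp', heqp⟩ := hp z hz
  obtain ⟨q', hq', heqq⟩ := hq z hz
  refine ⟨p' - q', hp'.sub hq', ?_⟩
  simp only [Pi.sub_apply]
  linear_combination heqp - heqq

lemma comp_const_mul (hp : SolvesEulerOn γ p g s) (u : 𝕜) :
    SolvesEulerOn γ (fun z => p (u * z)) (fun z => g (u * z)) ((u * ·) ⁻¹' s) := fun z hz => by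
  obtain ⟨p', hp', heq⟩ := hp (u * z) hz
  have hu : HasDerivAt (u * ·) u z := by simpa using (hasDerivAt_id z).const_mul u
  exact ⟨p' * u, hp'.comp z hu, by linear_combination heq⟩

end NormedField

lemma re_comp_ofReal {γ : ℝ} {p g : ℂ → ℂ} {s : Set ℂ} (hp : SolvesEulerOn (γ : ℂ) p g s) :
    SolvesEulerOn γ (fun x : ℝ => (p x).re) (fun x : ℝ => (g x).re) (ofReal ⁻¹' s) :=
  fun x hx => by
    obtain ⟨p', hp', heq⟩ := hp x hx
    exact ⟨p'.re, hp'.real_of_complex, by simpa using congrArg re heq⟩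

section Comparison

variable {γ b : ℝ} {p q g h : ℝ → ℝ}

/-- The integrating factor `t ^ (γ - 1)` turns the equation into
`(t ^ γ * p t)' = γ * t ^ (γ - 1) * g t`. -/
lemma monotoneOn_rpow_mul (hγ : 0 < γ) (hp : SolvesEulerOn γ p g (Icc 0 b))
    (hg : ∀ t ∈ Icc 0 b, 0 ≤ g t) : MonotoneOn (fun t => t ^ γ * p t) (Icc 0 b) := by
  have hderiv : ∀ t ∈ interior (Icc 0 b),
      HasDerivWithinAt (fun t => t ^ γ * p t) (γ * t ^ (γ - 1) * g t) (interior (Icc 0 b)) t := by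
    intro t ht
    obtain ⟨p', hp', heq⟩ := hp t (interior_subset ht)
    rw [interior_Icc] at ht
    have hrpow : t ^ γ = t ^ (γ - 1) * t := by rw [← Real.rpow_add_one ht.1.ne', sub_add_cancel]
    refine (((Real.hasDerivAt_rpow_const (.inl ht.1.ne')).mul hp').congr_deriv ?_).hasDerivWithinAt
    linear_combination t ^ (γ - 1) * heq + p' * hrpow
  refine monotoneOn_of_hasDerivWithinAt_nonneg (convex_Icc 0 b) ?_ hderiv fun t ht => ?_
  · exact (Real.continuous_rpow_const hγ.le).continuousOn.mul hp.differentiableOn.continuousOn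
  · have hgt := hg t (interior_subset ht)
    rw [interior_Icc] at ht
    have := ht.1
    positivity

lemma apply_nonneg (hγ : 0 < γ) (hb : 0 ≤ b) (hp : SolvesEulerOn γ p g (Icc 0 b))
    (hg : ∀ t ∈ Icc 0 b, 0 ≤ g t) : 0 ≤ p b := by
  rcases hb.eq_or_lt with rfl | hb
  · obtain ⟨p', -, heq⟩ := hp 0 (left_mem_Icc.2 le_rfl)
    have hp0 : p 0 = g 0 := by simpa [hγ.ne'] using heq
    exact hp0 ▸ hg 0 (left_mem_Icc.2 le_rfl)
  · have hmono := hp.monotoneOn_rpow_mul hγ hg (left_mem_Icc.2 hb.le) (right_mem_Icc.2 hb.le) hb.le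
    simp only [Real.zero_rpow hγ.ne', zero_mul] at hmono
    exact nonneg_of_mul_nonneg_right hmono (Real.rpow_pos_of_pos hb γ)

lemma apply_le_apply (hγ : 0 < γ) (hb : 0 ≤ b) (hp : SolvesEulerOn γ p g (Icc 0 b))
    (hq : SolvesEulerOn γ q h (Icc 0 b)) (hgh : ∀ t ∈ Icc 0 b, g t ≤ h t) : p b ≤ q b := by
  have hsub : 0 ≤ (q - p) b :=
    (hq.sub hp).apply_nonneg hγ hb fun t ht => sub_nonneg.2 (hgh t ht)
  exact sub_nonneg.1 hsub

end Comparison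

section Ray

variable {γ R : ℝ} {p g : ℂ → ℂ} {z : ℂ}

lemma re_const_mul_comp_ray {ζ : ℂ} {b : ℝ} (hp : SolvesEulerOn (γ : ℂ) p g (ball 0 R))
    (hζ : ‖ζ‖ = 1) (hb : b < R) (u : ℂ) :
    SolvesEulerOn γ (fun t : ℝ => (u * p (ζ * t)).re) (fun t : ℝ => (u * g (ζ * t)).re)
      (Icc 0 b) := by
  have hray := ((hp.const_mul_add_const u 0).comp_const_mul ζ).re_comp_ofReal
  simp only [add_zero] at hray
  refine hray.mono fun t ht => ?_
  simpa [hζ, abs_of_nonneg ht.1] using ht.2.trans_lt hb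

theorem le_re_apply {m L : ℝ → ℝ} (hγ : 0 < γ) (hp : SolvesEulerOn (γ : ℂ) p g (ball 0 R))
    (hz : z ∈ ball 0 R) (hL : SolvesEulerOn γ L m (Icc 0 ‖z‖))
    (hmg : ∀ y ∈ ball 0 R, m ‖y‖ ≤ (g y).re) : L ‖z‖ ≤ (p z).re := by
  obtain ⟨ζ, hζ, hζz⟩ := exists_norm_mul_eq_self z
  have hzR : ‖z‖ < R := by simpa using hz
  have hray := hp.re_const_mul_comp_ray hζ hzR 1
  simp only [one_mul] at hray
  conv_rhs => rw [← hζz]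
  refine hL.apply_le_apply hγ (norm_nonneg z) hray fun t ht => ?_
  have hnorm : ‖ζ * t‖ = t := by simp [hζ, abs_of_nonneg ht.1]
  have hmem : ζ * t ∈ ball 0 R := by
    simpa only [mem_ball_zero_iff, hnorm] using ht.2.trans_lt hzR
  simpa only [hnorm] using hmg _ hmem

theorem norm_apply_le {M U : ℝ → ℝ} (hγ : 0 < γ) (hp : SolvesEulerOn (γ : ℂ) p g (ball 0 R))
    (hz : z ∈ ball 0 R) (hU : SolvesEulerOn γ U M (Icc 0 ‖z‖))
    (hgM : ∀ y ∈ ball 0 R, ‖g y‖ ≤ M ‖y‖) : ‖p z‖ ≤ U ‖z‖ := by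
  obtain ⟨ζ, hζ, hζz⟩ := exists_norm_mul_eq_self z
  obtain ⟨u, hu, hupz⟩ := exists_norm_eq_mul_self (p z)
  have hzR : ‖z‖ < R := by simpa using hz
  have hnorm_pz : ‖p z‖ = (u * p (ζ * (‖z‖ : ℝ))).re := by rw [hζz, ← hupz, ofReal_re]
  rw [hnorm_pz]
  refine (hp.re_const_mul_comp_ray hζ hzR u).apply_le_apply hγ (norm_nonneg z) hU fun t ht => ?_
  have hnorm : ‖ζ * t‖ = t := by simp [hζ, abs_of_nonneg ht.1]
  calc (u * g (ζ * t)).re ≤ ‖u * g (ζ * t)‖ := re_le_norm _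
    _ = ‖g (ζ * t)‖ := by rw [norm_mul, hu, one_mul]
    _ ≤ M ‖ζ * t‖ := hgM _ (by simpa only [mem_ball_zero_iff, hnorm] using ht.2.trans_lt hzR)
    _ = M t := by rw [hnorm]

end Ray

end SolvesEulerOn

section PowerSeries

/-- The sum of the power series with coefficients `b`, with the junk value `0` where it diverges. -/
def powerSum (b : ℕ → ℂ) (z : ℂ) : ℂ := ∑' n, b n * z ^ n

variable {b d : ℕ → ℂ} {R : ℝ}

lemma powerSum_apply_zero (b : ℕ → ℂ) : powerSum b 0 = b 0 := by
  rw [powerSum, tsum_eq_single 0 fun n hn => by simp [hn], pow_zero, mul_one]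

lemma exists_hasDerivAt_powerSum (hb : ∀ z ∈ ball 0 R, Summable fun n => b n * z ^ n) {z : ℂ}
    (hz : z ∈ ball 0 R) :
    ∃ D, HasDerivAt (powerSum b) D z ∧ HasSum (fun n : ℕ => n * (b n * z ^ n)) (z * D) := by
  obtain ⟨ρ, hzρ, hρR⟩ := exists_between (mem_ball_zero_iff.1 hz)
  have hρ : 0 < ρ := (norm_nonneg z).trans_lt hzρ
  have hsummable : Summable fun n => ‖b n * (ρ : ℂ) ^ n‖ :=
    (hb ρ (by simpa [abs_of_pos hρ] using hρR)).norm
  have hdiff (n : ℕ) : DifferentiableOn ℂ (fun y => b n * y ^ n) (ball 0 ρ) := by fun_prop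
  have hbound (n : ℕ) (y : ℂ) (hy : y ∈ ball 0 ρ) : ‖b n * y ^ n‖ ≤ ‖b n * (ρ : ℂ) ^ n‖ := by
    have hyρ : ‖y‖ ≤ ‖(ρ : ℂ)‖ := by simpa [abs_of_pos hρ] using (mem_ball_zero_iff.1 hy).le
    simp only [norm_mul, norm_pow]
    gcongr
  have hzmem : z ∈ ball 0 ρ := mem_ball_zero_iff.2 hzρ
  refine ⟨deriv (powerSum b) z, ?_, ?_⟩
  · exact ((differentiableOn_tsum_of_summable_norm hsummable hdiff isOpen_ball
      hbound).differentiableAt (isOpen_ball.mem_nhds hzmem)).hasDerivAt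
  · refine ((hasSum_deriv_of_summable_norm hsummable hdiff isOpen_ball hbound
      hzmem).mul_left z).congr_fun fun n => ?_
    rcases n with _ | n
    · simp
    · simp only [deriv_const_mul_field, deriv_pow_field, Nat.add_sub_cancel]
      ring

lemma solvesEulerOn_powerSum {κ : ℂ} (hb : ∀ z ∈ ball 0 R, Summable fun n => b n * z ^ n)
    (hd : ∀ z ∈ ball 0 R, Summable fun n => d n * z ^ n)
    (hbd : ∀ n : ℕ, (κ + n) * b n = κ * d n) :
    SolvesEulerOn κ (powerSum b) (powerSum d) (ball 0 R) := fun z hz => by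
  obtain ⟨D, hD, hzD⟩ := exists_hasDerivAt_powerSum hb hz
  refine ⟨D, hD, (((hb z hz).hasSum.mul_left κ).add hzD).unique ?_⟩
  refine ((hd z hz).hasSum.mul_left κ).congr_fun fun n => ?_
  linear_combination z ^ n * hbd n

lemma summable_mul_mul_pow_of_tendsto {l : ℂ} (hd : Tendsto d atTop (𝓝 l)) {z : ℂ}
    (hb : Summable fun n => b n * z ^ n) : Summable fun n => d n * b n * z ^ n :=
  (hb.norm.mul_tendsto_const (Nat.cofinite_eq_atTop ▸ hd)).congr fun n => by ring

lemma summable_shift_mul_pow {z : ℂ} (hb : Summable fun n => b n * z ^ n) :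
    Summable fun n => b (n + 1) * z ^ n := by
  rcases eq_or_ne z 0 with rfl | hz
  · exact summable_of_ne_finset_zero (s := {0}) fun n hn => by simp_all
  · refine (((summable_nat_add_iff 1).2 hb).mul_right z⁻¹).congr fun n => ?_
    rw [pow_succ, ← mul_assoc, mul_inv_cancel_right₀ hz]

lemma tendsto_inv_add_natCast (x : ℂ) : Tendsto (fun n : ℕ => (x + n)⁻¹) atTop (𝓝 0) := by
  refine tendsto_inv₀_cobounded.comp ((tendsto_const_add_cobounded x).comp ?_)
  rw [← tendsto_norm_atTop_iff_cobounded]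
  simpa using tendsto_natCast_atTop_atTop

end PowerSeries

section Pochhammer

variable {x : ℂ}

lemma NotNonposInt.add_natCast_ne_zero (hx : NotNonposInt x) (n : ℕ) : x + n ≠ 0 :=
  fun h => hx n (eq_neg_of_add_eq_zero_left h)

lemma NotNonposInt.add_one (hx : NotNonposInt x) : NotNonposInt (x + 1) := fun n hn =>
  hx.add_natCast_ne_zero (n + 1) (by push_cast; linear_combination hn)

lemma notNonposInt_ofReal_of_pos {γ : ℝ} (hγ : 0 < γ) : NotNonposInt γ := fun n hn => by
  have hγn : γ = -n := by exact_mod_cast hn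
  linarith [n.cast_nonneg (α := ℝ)]

lemma NotNonposInt.poch_ne_zero (hx : NotNonposInt x) (n : ℕ) : poch x n ≠ 0 :=
  Finset.prod_ne_zero_iff.2 fun i _ => hx.add_natCast_ne_zero i

lemma poch_succ (x : ℂ) (n : ℕ) : poch x (n + 1) = poch x n * (x + n) :=
  Finset.prod_range_succ _ n

lemma poch_mul_add_natCast (x : ℂ) (n : ℕ) : poch x n * (x + n) = x * poch (x + 1) n := by
  rw [← poch_succ, poch, poch, Finset.prod_range_succ', mul_comm, Nat.cast_zero, add_zero]
  congr 1
  exact Finset.prod_congr rfl fun i _ => by push_cast; ring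

lemma poch_one (n : ℕ) : poch 1 n = n.factorial := by
  rw [poch, ← Finset.prod_range_add_one_eq_factorial]
  push_cast
  exact Finset.prod_congr rfl fun i _ => add_comm _ _

lemma NotNonposInt.add_natCast_div_poch_add_one (hx : NotNonposInt x) (n : ℕ) :
    (x + n) / poch (x + 1) n = x / poch x n := by
  rw [div_eq_div_iff (hx.add_one.poch_ne_zero n) (hx.poch_ne_zero n), mul_comm,
    poch_mul_add_natCast]

end Pochhammer

section Hypergeometric

variable {κ : ℂ}

lemma hyp2F1_one_eq_powerSum (hκ : NotNonposInt κ) :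
    hyp2F1 1 κ (κ + 1) = powerSum fun n => κ / (κ + n) := by
  funext z
  refine tsum_congr fun n => ?_
  have hfact : (n.factorial : ℂ) ≠ 0 := by exact_mod_cast n.factorial_ne_zero
  have hrec : poch κ n / poch (κ + 1) n = κ / (κ + n) := by
    rw [div_eq_div_iff (hκ.add_one.poch_ne_zero n) (hκ.add_natCast_ne_zero n),
      poch_mul_add_natCast]
  rw [poch_one, mul_comm (n.factorial : ℂ), mul_div_mul_right _ _ hfact, hrec]

theorem solvesEulerOn_hyp2F1 (hκ : NotNonposInt κ) :
    SolvesEulerOn κ (hyp2F1 1 κ (κ + 1)) (fun z => (1 - z)⁻¹) unitDisk := by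
  have hgeom (z : ℂ) (hz : z ∈ ball (0 : ℂ) 1) : HasSum (fun n : ℕ => 1 * z ^ n) (1 - z)⁻¹ := by
    simpa using hasSum_geometric_of_norm_lt_one (mem_ball_zero_iff.1 hz)
  have hlim : Tendsto (fun n : ℕ => κ / (κ + n)) atTop (𝓝 0) := by
    simpa [div_eq_mul_inv] using (tendsto_inv_add_natCast κ).const_mul κ
  rw [hyp2F1_one_eq_powerSum hκ]
  refine (solvesEulerOn_powerSum (d := fun _ => 1) (fun z hz => ?_)
    (fun z hz => (hgeom z hz).summable) fun n => ?_).congr_right fun z hz => (hgeom z hz).tsum_eq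
  · simpa using summable_mul_mul_pow_of_tendsto hlim (hgeom z hz).summable
  · rw [mul_div_cancel₀ _ (hκ.add_natCast_ne_zero n), mul_one]

end Hypergeometric

section Struve

/-- The Taylor coefficients of `S_k^c f(z) / z`. -/
def struveCoeff (k c : ℂ) (a : ℕ → ℂ) (n : ℕ) : ℂ :=
  (-c / 4) ^ n / (poch (3 / 2) n * poch k n) * a (n + 1)

/-- The quotient `S_k^c f(z) / z`, with its removable singularity at `0` filled in. -/
def struveQuot (k c : ℂ) (a : ℕ → ℂ) : ℂ → ℂ := powerSum (struveCoeff k c a)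

variable {k c : ℂ} {a : ℕ → ℂ} {z : ℂ}

lemma tendsto_struve_multiplier (k c : ℂ) :
    Tendsto (fun n => (-c / 4) ^ n / (poch (3 / 2) n * poch k n)) atTop (𝓝 0) := by
  set d : ℕ → ℂ := fun n => (-c / 4) ^ n / (poch (3 / 2) n * poch k n)
  have hstep (n : ℕ) : d (n + 1) = -c / 4 * ((3 / 2 + n : ℂ)⁻¹ * (k + n)⁻¹) * d n := by
    simp only [d, poch_succ, pow_succ, div_eq_mul_inv, mul_inv]
    ring
  have hratio : Tendsto (fun n : ℕ => -c / 4 * ((3 / 2 + n : ℂ)⁻¹ * (k + n)⁻¹)) atTop (𝓝 0) := by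
    simpa using ((tendsto_inv_add_natCast (3 / 2)).mul (tendsto_inv_add_natCast k)).const_mul
      (-c / 4)
  refine (summable_of_ratio_norm_eventually_le (r := 1 / 2) (by norm_num) ?_).tendsto_atTop_zero
  filter_upwards [hratio.norm.eventually_le_const (u := 1 / 2) (by simp)] with n hn
  rw [hstep, norm_mul]
  gcongr

lemma summable_struveCoeff_mul_pow (ha : InA a) (k c : ℂ) (hz : z ∈ unitDisk) :
    Summable fun n => struveCoeff k c a n * z ^ n :=
  summable_mul_mul_pow_of_tendsto (tendsto_struve_multiplier k c)
    (summable_shift_mul_pow (ha.2.2 z hz))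

lemma struveCoeff_zero (ha : InA a) (k c : ℂ) : struveCoeff k c a 0 = 1 := by
  simp [struveCoeff, poch, ha.2.1]

lemma struveQuot_zero (ha : InA a) (k c : ℂ) : struveQuot k c a 0 = 1 := by
  rw [struveQuot, powerSum_apply_zero, struveCoeff_zero ha]

lemma struveOp_eq_mul_struveQuot (ha : InA a) (k c : ℂ) (hz : z ∈ unitDisk) :
    struveOp k c a z = z * struveQuot k c a z := by
  rw [struveQuot, powerSum, (summable_struveCoeff_mul_pow ha k c hz).tsum_eq_zero_add,
    struveCoeff_zero ha, pow_zero, mul_one, mul_add, mul_one, ← tsum_mul_left, struveOp]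
  congr 1
  refine tsum_congr fun n => ?_
  rw [struveCoeff]
  ring

lemma struveQuot_ne_zero (ha : InA a) (hnv : Nonvan (struveOp k c a)) (hz : z ∈ unitDisk) :
    struveQuot k c a z ≠ 0 := by
  rcases eq_or_ne z 0 with rfl | hz0
  · simp [struveQuot_zero ha]
  · exact right_ne_zero_of_mul (struveOp_eq_mul_struveQuot ha k c hz ▸ hnv z hz hz0)

lemma ratioPow_struveOp (ha : InA a) (k c : ℂ) (μ : ℝ) (hz : z ∈ unitDisk) :
    ratioPow μ (struveOp k c a) z = (struveQuot k c a z)⁻¹ ^ (μ : ℂ) := by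
  rw [ratioPow]
  split_ifs with hz0
  · rw [hz0, struveQuot_zero ha, inv_one]
  · rw [struveOp_eq_mul_struveQuot ha k c hz, div_mul_cancel_left₀ hz0]

lemma ratioQ_struveOp (ha : InA a) (k l c : ℂ) (hz : z ∈ unitDisk) :
    ratioQ (struveOp k c a) (struveOp l c a) z = struveQuot k c a z / struveQuot l c a z := by
  rw [ratioQ]
  split_ifs with hz0
  · rw [hz0, struveQuot_zero ha, struveQuot_zero ha, div_one]
  · rw [struveOp_eq_mul_struveQuot ha k c hz, struveOp_eq_mul_struveQuot ha l c hz,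
      mul_div_mul_left _ _ hz0]

theorem solvesEulerOn_struveQuot (ha : InA a) (hk : NotNonposInt k) (c : ℂ) :
    SolvesEulerOn k (struveQuot (k + 1) c a) (struveQuot k c a) unitDisk := by
  refine solvesEulerOn_powerSum (fun _ => summable_struveCoeff_mul_pow ha (k + 1) c)
    (fun _ => summable_struveCoeff_mul_pow ha k c) fun n => ?_
  have hrec := hk.add_natCast_div_poch_add_one n
  simp only [struveCoeff, div_mul_eq_div_div]
  linear_combination (-c / 4) ^ n / poch (3 / 2) n * a (n + 1) * hrec

lemma differentiableOn_struveQuot (ha : InA a) (k c : ℂ) :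
    DifferentiableOn ℂ (struveQuot k c a) unitDisk := fun _ hz =>
  let ⟨_, hD, _⟩ := exists_hasDerivAt_powerSum (fun _ => summable_struveCoeff_mul_pow ha k c) hz
  hD.differentiableAt.differentiableWithinAt

end Struve

section PrincipalBranch

lemma re_neg_and_im_eq_zero_of_notMem_slitPlane {x : ℂ} (hx : x ∉ slitPlane) (hx0 : x ≠ 0) :
    x.re < 0 ∧ x.im = 0 := by
  simp only [mem_slitPlane_iff, not_or, not_lt, not_not] at hx
  exact ⟨hx.1.lt_of_ne fun hre => hx0 (Complex.ext hre hx.2), hx.2⟩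

lemma tendsto_cpow_const_nhdsWithin_im_neg {x : ℂ} (hx : x ∉ slitPlane) (hx0 : x ≠ 0) (ν : ℂ) :
    Tendsto (· ^ ν) (𝓝[{y : ℂ | y.im < 0}] x) (𝓝 (exp (-ν * (2 * Real.pi * I)) * x ^ ν)) := by
  obtain ⟨hre, him⟩ := re_neg_and_im_eq_zero_of_notMem_slitPlane hx hx0
  have hlog : log x = Real.log ‖x‖ + Real.pi * I := by rw [log, arg_eq_pi_iff.2 ⟨hre, him⟩]
  have hlim := (continuous_exp.tendsto _).comp
    ((tendsto_log_nhdsWithin_im_neg_of_re_neg_of_im_zero hre him).mul_const ν)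
  have hval : exp ((Real.log ‖x‖ - Real.pi * I) * ν) = exp (-ν * (2 * Real.pi * I)) * x ^ ν := by
    rw [cpow_def_of_ne_zero hx0, hlog, ← exp_add]
    ring_nf
  rw [← hval]
  refine hlim.congr' ?_
  filter_upwards [self_mem_nhdsWithin] with y hy
  have hy0 : y ≠ 0 := by rintro rfl; simp at hy
  rw [Function.comp_apply, cpow_def_of_ne_zero hy0]

/-- Approaching `h z` from below the cut multiplies the limit by `exp (-2πiν) ≠ 1`, which only
`G z = 0` can compensate. -/
lemma eq_zero_of_continuousAt_cpow_mul {h G : ℂ → ℂ} {ν z : ℂ} (hν : ∀ n : ℤ, ν ≠ n)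
    (hh : ContinuousAt h z) (hopen : 𝓝 (h z) ≤ map h (𝓝 z)) (hne : h z ≠ 0)
    (hslit : h z ∉ slitPlane) (hG : ContinuousAt G z)
    (hhG : ContinuousAt (fun y => h y ^ ν * G y) z) : G z = 0 := by
  set V : Set ℂ := {y | y.im < 0}
  have hclosure : h z ∈ closure V := by
    rw [closure_setOfPred_im_lt]
    exact (re_neg_and_im_eq_zero_of_notMem_slitPlane hslit hne).2.le
  have : (𝓝[h ⁻¹' V] z).NeBot := mem_closure_iff_nhdsWithin_neBot.1 <|
    mem_closure_iff_frequently.2 ((mem_closure_iff_frequently.1 hclosure).filter_mono hopen)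
  have hhV : Tendsto h (𝓝[h ⁻¹' V] z) (𝓝[V] (h z)) :=
    hh.continuousWithinAt.tendsto_nhdsWithin fun _ hy => hy
  have hlim := ((tendsto_cpow_const_nhdsWithin_im_neg hslit hne ν).comp hhV).mul
    (hG.mono_left nhdsWithin_le_nhds)
  have heq := tendsto_nhds_unique hlim (hhG.mono_left nhdsWithin_le_nhds)
  by_contra hGz
  have hexp : exp (-ν * (2 * Real.pi * I)) = 1 :=
    mul_right_cancel₀ (cpow_ne_zero_iff.2 (.inl hne)) (by rw [one_mul, mul_right_cancel₀ hGz heq])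
  obtain ⟨n, hn⟩ := exp_eq_one_iff.1 hexp
  refine hν (-n) ?_
  push_cast
  rw [← mul_right_cancel₀ two_pi_I_ne_zero hn, neg_neg]

lemma frequently_notMem_slitPlane_nhdsNE {x : ℂ} (hx : x ∉ slitPlane) :
    ∃ᶠ y in 𝓝[≠] x, y ∉ slitPlane := by
  have hline : Tendsto (fun t : ℝ => x - t) (𝓝[>] 0) (𝓝[≠] x) := by
    refine tendsto_nhdsWithin_iff.2 ⟨?_, ?_⟩
    · have : ContinuousAt (fun t : ℝ => x - t) 0 := by fun_prop
      simpa [ContinuousAt] using this.mono_left nhdsWithin_le_nhds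
    · filter_upwards [self_mem_nhdsWithin] with t ht
      simpa using (mem_Ioi.1 ht).ne'
  refine hline.frequently (Eventually.frequently ?_)
  filter_upwards [self_mem_nhdsWithin] with t ht
  simp only [mem_slitPlane_iff, not_or, not_lt, not_not] at hx ⊢
  exact ⟨by simpa using hx.1.trans (mem_Ioi.1 ht).le, by simpa using hx.2⟩

/-- If `h` met the cut, the open mapping theorem would make `h ⁻¹' slitPlaneᶜ`, a subset of the
zeros of `G`, accumulate there, so that `G` would vanish identically. -/
theorem mem_slitPlane_of_continuousOn_cpow_mul {h G : ℂ → ℂ} {ν z₀ z : ℂ} {s : Set ℂ}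
    (hν : ∀ n : ℤ, ν ≠ n) (hs : IsOpen s) (hs' : IsPreconnected s)
    (hh : AnalyticOnNhd ℂ h s) (hG : AnalyticOnNhd ℂ G s) (hne : ∀ y ∈ s, h y ≠ 0)
    (hz₀ : z₀ ∈ s) (hhz₀ : h z₀ ∈ slitPlane) (hGz₀ : G z₀ ≠ 0)
    (hhG : ContinuousOn (fun y => h y ^ ν * G y) s) (hz : z ∈ s) : h z ∈ slitPlane := by
  by_contra hslit
  have hopen (y : ℂ) (hy : y ∈ s) (hyslit : h y ∉ slitPlane) : 𝓝 (h y) ≤ map h (𝓝 y) := by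
    refine (hh y hy).eventually_constant_or_nhds_le_map_nhds.resolve_left fun hconst => ?_
    have heq : h z₀ = h y :=
      hh.eqOn_of_preconnected_of_eventuallyEq analyticOnNhd_const hs' hy hconst hz₀
    exact hyslit (heq ▸ hhz₀)
  have hcut : ∃ᶠ y in 𝓝 z, h y ≠ h z ∧ h y ∉ slitPlane :=
    (frequently_nhdsWithin_iff.1 (frequently_notMem_slitPlane_nhdsNE hslit)).filter_mono
      (hopen z hz hslit) |>.mono fun _ hy => hy.symm
  have hzeros : ∃ᶠ y in 𝓝[≠] z, G y = 0 := by
    refine frequently_nhdsWithin_iff.2 ((hcut.and_eventually (hs.mem_nhds hz)).mono ?_)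
    rintro y ⟨⟨hyz, hyslit⟩, hy⟩
    exact ⟨eq_zero_of_continuousAt_cpow_mul hν (hh y hy).continuousAt (hopen y hy hyslit)
      (hne y hy) hyslit (hG y hy).continuousAt (hhG.continuousAt (hs.mem_nhds hy)),
      fun h_eq => hyz (congrArg h h_eq)⟩
  exact hGz₀ (hG.eqOn_zero_of_preconnected_of_frequently_eq_zero hs' hz hzeros hz₀)

lemma hasDerivAt_cpow_const_of_mem_slitPlane_or_int {x ν : ℂ} (hx : x ≠ 0)
    (hν : x ∈ slitPlane ∨ ∃ n : ℤ, ν = n) : HasDerivAt (· ^ ν) (ν * x ^ (ν - 1)) x := by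
  rcases hν with hslit | ⟨n, rfl⟩
  · simpa using (hasDerivAt_id x).cpow_const hslit
  · have hpow : x ^ ((n : ℂ) - 1) = x ^ (n - 1) := by exact_mod_cast cpow_intCast x (n - 1)
    simpa only [cpow_intCast, hpow] using hasDerivAt_zpow n x (.inl hx)

lemma SolvesEulerOn.inv_cpow {k lam γ μ : ℂ} {F G : ℂ → ℂ} {s : Set ℂ}
    (hF : SolvesEulerOn k F G s) (hne : ∀ z ∈ s, F z ≠ 0)
    (hμ : ∀ z ∈ s, (F z)⁻¹ ∈ slitPlane ∨ ∃ n : ℤ, μ = n) (hγ : γ * lam = μ * k) :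
    SolvesEulerOn γ (fun z => (F z)⁻¹ ^ μ)
      (fun z => (F z)⁻¹ ^ μ * (1 + lam - lam * (G z / F z))) s := fun z hz => by
  obtain ⟨F', hF', heq⟩ := hF z hz
  have hFz := hne z hz
  have hcpow : (F z)⁻¹ ^ (μ - 1) = (F z)⁻¹ ^ μ * F z := by
    rw [cpow_sub _ _ (inv_ne_zero hFz), cpow_one, div_inv_eq_mul]
  have hderiv : HasDerivAt (fun z => (F z)⁻¹ ^ μ) _ z :=
    HasDerivAt.comp (h₂ := (· ^ μ)) z
      (hasDerivAt_cpow_const_of_mem_slitPlane_or_int (inv_ne_zero hFz) (hμ z hz))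
      (hF'.fun_inv hFz)
  refine ⟨_, hderiv, ?_⟩
  simp only [hcpow]
  generalize (F z)⁻¹ ^ μ = P
  field_simp
  linear_combination P * (G z - F z) * hγ - P * μ * heq

end PrincipalBranch

section Janowski

/-- The Janowski function `z ↦ (1 + A z) / (1 + B z)`. -/
def janowski {𝕜 : Type*} [Field 𝕜] (A B z : 𝕜) : 𝕜 := (1 + A * z) / (1 + B * z)

variable {A B s : ℝ} {w : ℂ}

lemma abs_mul_lt_one {x : ℝ} (hB : |B| ≤ 1) (hx : |x| < 1) : |B * x| < 1 := by
  rw [abs_mul]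
  exact (mul_le_of_le_one_left (abs_nonneg x) hB).trans_lt hx

lemma one_add_ofReal_mul_ne_zero (hB : |B| ≤ 1) (hw : ‖w‖ < 1) : 1 + (B : ℂ) * w ≠ 0 := by
  intro h0
  have hnorm : ‖(B : ℂ) * w‖ = 1 := by rw [eq_neg_of_add_eq_zero_right h0, norm_neg, norm_one]
  have hlt : ‖(B : ℂ) * w‖ < 1 := by
    rw [norm_mul, norm_real]
    exact (mul_le_of_le_one_left (norm_nonneg w) hB).trans_lt hw
  exact hlt.ne hnorm

lemma continuousOn_janowski (hB : |B| ≤ 1) : ContinuousOn (janowski (A : ℂ) B) unitDisk := by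
  refine ContinuousOn.div (by fun_prop) (by fun_prop) fun z hz => ?_
  exact one_add_ofReal_mul_ne_zero hB (mem_ball_zero_iff.1 hz)

/-- After squaring, this is `(s² - ‖w‖²) (1 - B² s²) ≥ 0`. -/
lemma norm_add_ofReal_mul_sq_le (hB : |B| ≤ 1) (hs : s < 1) (hw : ‖w‖ ≤ s) :
    ‖w + (B : ℂ) * s ^ 2‖ ≤ s * ‖1 + (B : ℂ) * w‖ := by
  have hs0 : 0 ≤ s := (norm_nonneg w).trans hw
  have hBs : (B * s) ^ 2 ≤ 1 :=
    (sq_le_one_iff_abs_le_one _).2 (abs_mul_lt_one hB (by rwa [abs_of_nonneg hs0])).le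
  have hwsq : w.re * w.re + w.im * w.im ≤ s ^ 2 := by
    rw [← normSq_apply, ← Complex.sq_norm]
    gcongr
  refine le_of_sq_le_sq ?_ (by positivity)
  rw [mul_pow, Complex.sq_norm, Complex.sq_norm, normSq_apply, normSq_apply, ← ofReal_pow]
  simp only [add_re, add_im, one_re, one_im, re_ofReal_mul, im_ofReal_mul, ofReal_re, ofReal_im]
  nlinarith [mul_nonneg (sub_nonneg.2 hwsq) (sub_nonneg.2 hBs)]

/-- The center and radius are those of the disk with diameter
`[janowski A B (-s), janowski A B s]`. -/
lemma norm_janowski_sub_center_le (hB : |B| ≤ 1) (hBA : B ≤ A) (hs : s < 1) (hw : ‖w‖ ≤ s) :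
    ‖janowski (A : ℂ) B w - ((1 - A * B * s ^ 2) / (1 - B ^ 2 * s ^ 2) : ℝ)‖ ≤
      (A - B) * s / (1 - B ^ 2 * s ^ 2) := by
  have hs0 : 0 ≤ s := (norm_nonneg w).trans hw
  have hden : 0 < 1 - B ^ 2 * s ^ 2 := by
    have hBs := (sq_lt_one_iff_abs_lt_one _).2 (abs_mul_lt_one hB (by rwa [abs_of_nonneg hs0]))
    linarith [mul_pow B s 2]
  have hdenC : (1 - (B : ℂ) ^ 2 * s ^ 2) ≠ 0 := by exact_mod_cast hden.ne'
  have hne := one_add_ofReal_mul_ne_zero hB (hw.trans_lt hs)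
  have heq : janowski (A : ℂ) B w - ((1 - A * B * s ^ 2) / (1 - B ^ 2 * s ^ 2) : ℝ) =
      ((A - B) / (1 - B ^ 2 * s ^ 2) : ℝ) * ((w + B * s ^ 2) / (1 + B * w)) := by
    rw [janowski]
    push_cast
    rw [div_sub_div _ _ hne hdenC, div_mul_div_comm]
    congr 1 <;> ring
  have hcoeff : 0 ≤ (A - B) / (1 - B ^ 2 * s ^ 2) := div_nonneg (sub_nonneg.2 hBA) hden.le
  rw [heq, norm_mul, norm_div, norm_real, Real.norm_of_nonneg hcoeff, mul_div_right_comm]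
  gcongr
  exact (div_le_iff₀ (norm_pos_iff.2 hne)).2 (norm_add_ofReal_mul_sq_le hB hs hw)

lemma janowski_eq_center_add (A : ℝ) {x : ℝ} (hBx : |B * x| < 1) :
    janowski A B x =
      (1 - A * B * x ^ 2) / (1 - B ^ 2 * x ^ 2) + (A - B) * x / (1 - B ^ 2 * x ^ 2) := by
  obtain ⟨hlow, hupp⟩ := abs_lt.1 hBx
  have hden : 1 - B ^ 2 * x ^ 2 = (1 + B * x) * (1 - B * x) := by ring
  rw [janowski, hden, ← add_div, div_eq_div_iff (by linarith)
    (mul_ne_zero (by linarith) (by linarith))]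
  ring

lemma janowski_neg_norm_le_re (hB : |B| ≤ 1) (hBA : B ≤ A) (hs : s < 1) (hw : ‖w‖ ≤ s) :
    janowski A B (-s) ≤ (janowski (A : ℂ) B w).re := by
  have hBs : |B * -s| < 1 :=
    abs_mul_lt_one hB (by rwa [abs_neg, abs_of_nonneg ((norm_nonneg w).trans hw)])
  have hdisk := (abs_re_le_norm _).trans (norm_janowski_sub_center_le hB hBA hs hw)
  rw [sub_re, ofReal_re] at hdisk
  rw [janowski_eq_center_add A hBs, neg_sq, mul_neg, neg_div]
  linarith [(abs_le.1 hdisk).1]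

lemma norm_janowski_le (hB : |B| ≤ 1) (hBA : B ≤ A) (hAB : A * B ≤ 1) (hs : s < 1)
    (hw : ‖w‖ ≤ s) : ‖janowski (A : ℂ) B w‖ ≤ janowski A B s := by
  have hs0 : 0 ≤ s := (norm_nonneg w).trans hw
  have hBs : |B * s| < 1 := abs_mul_lt_one hB (by rwa [abs_of_nonneg hs0])
  have hcenter : 0 ≤ (1 - A * B * s ^ 2) / (1 - B ^ 2 * s ^ 2) := by
    have hden := (sq_lt_one_iff_abs_lt_one _).2 hBs
    refine div_nonneg ?_ (by linarith [mul_pow B s 2])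
    nlinarith [pow_le_one₀ (n := 2) hs0 hs.le, sq_nonneg s]
  rw [janowski_eq_center_add A hBs]
  refine (norm_le_norm_add_norm_sub' _ _).trans
    (add_le_add ?_ (norm_janowski_sub_center_le hB hBA hs hw))
  rw [norm_real, Real.norm_of_nonneg hcenter]

end Janowski

section Extremal

/-- The real solution, regular at `0`, of the Euler equation with right-hand side
`janowski A B`. The bounds `U(r)` and `L(r)` for `B ≠ 0` are its values at `r` and `-r`; for `B = 0`
they are its values at `1` and `-1`. -/
def janowskiExtremal (A B γ x : ℝ) : ℝ :=
  if B = 0 then 1 + γ / (γ + 1) * A * x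
  else A / B + (1 - A / B) * (hyp2F1 1 (γ : ℂ) ((γ : ℂ) + 1) (-((B * x : ℝ) : ℂ))).re

variable {A B γ : ℝ}

lemma solvesEulerOn_linear (A : ℝ) (hγ : γ + 1 ≠ 0) (s : Set ℝ) :
    SolvesEulerOn γ (fun x => 1 + γ / (γ + 1) * A * x) (janowski A 0) s := fun x _ => by
  refine ⟨γ / (γ + 1) * A, ?_, ?_⟩
  · simpa using ((hasDerivAt_id x).const_mul (γ / (γ + 1) * A)).const_add 1
  · rw [janowski]
    field_simp
    ring

lemma janowski_eq_partial_fraction {𝕜 : Type*} [Field 𝕜] {A B x : 𝕜} (hB : B ≠ 0)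
    (hx : 1 + B * x ≠ 0) : janowski A B x = (1 - A / B) * (1 + B * x)⁻¹ + A / B := by
  rw [janowski, div_eq_iff hx, add_mul, inv_mul_cancel_right₀ hx]
  field_simp
  ring

theorem solvesEulerOn_janowskiExtremal (A : ℝ) (hγ : 0 < γ) (hB : |B| ≤ 1) :
    SolvesEulerOn γ (janowskiExtremal A B γ) (janowski A B) (Ioo (-1) 1) := by
  rcases eq_or_ne B 0 with rfl | hB0
  · exact (solvesEulerOn_linear A (by positivity) _).congr_left isOpen_Ioo fun x _ => if_pos rfl
  · have hBx (x : ℝ) (hx : x ∈ Ioo (-1) 1) : |B * x| < 1 := abs_mul_lt_one hB (abs_lt.2 hx)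
    have hsol := (((solvesEulerOn_hyp2F1 (notNonposInt_ofReal_of_pos hγ)).comp_const_mul
      (-B : ℂ)).re_comp_ofReal.mono (t := Ioo (-1) 1) fun x hx => ?_).const_mul_add_const
        (1 - A / B) (A / B)
    · refine (hsol.congr_right fun x hx => ?_).congr_left isOpen_Ioo fun x _ => ?_
      · have hne : 1 + B * x ≠ 0 := by linarith [(abs_lt.1 (hBx x hx)).1]
        rw [janowski_eq_partial_fraction hB0 hne]
        norm_cast
        simp
      · simp only [janowskiExtremal, if_neg hB0, ofReal_mul, neg_mul, add_comm]
    · simpa [unitDisk, ← abs_mul] using hBx x hx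

lemma div_div_add_one_eq {μk lam : ℝ} (hlam : lam ≠ 0) :
    μk / lam / (μk / lam + 1) = μk / (μk + lam) := by
  rw [div_add_one hlam, div_div_div_cancel_right₀ hlam]

variable {μ k lam r : ℝ}

lemma lowerBdR_le_janowskiExtremal (hBA : B ≤ A) (hγ : 0 < μ * k / lam) (hr : r ≤ 1) :
    lowerBdR A B μ k lam r ≤ janowskiExtremal A B (μ * k / lam) (-r) := by
  rcases eq_or_ne B 0 with rfl | hB0
  · have hlam : lam ≠ 0 := by rintro rfl; simp at hγ
    have hcoeff : 0 ≤ μ * k / lam / (μ * k / lam + 1) * A := by positivity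
    simp only [lowerBdR, janowskiExtremal, if_true, ← div_div_add_one_eq hlam]
    linarith [mul_le_of_le_one_right hcoeff hr]
  · simp only [lowerBdR, janowskiExtremal, if_neg hB0, mul_neg, ofReal_neg, neg_neg, le_refl]

lemma janowskiExtremal_le_upperBdR (hBA : B ≤ A) (hγ : 0 < μ * k / lam) (hr : r ≤ 1) :
    janowskiExtremal A B (μ * k / lam) r ≤ upperBdR A B μ k lam r := by
  rcases eq_or_ne B 0 with rfl | hB0
  · have hlam : lam ≠ 0 := by rintro rfl; simp at hγ
    have hcoeff : 0 ≤ μ * k / lam / (μ * k / lam + 1) * A := by positivity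
    simp only [upperBdR, janowskiExtremal, if_true, ← div_div_add_one_eq hlam]
    linarith [mul_le_of_le_one_right hcoeff hr]
  · simp only [upperBdR, janowskiExtremal, if_neg hB0, le_refl]

end Extremal

section StruveClass

variable {α μ : ℝ} {k lam c : ℂ} {φ : ℂ → ℂ} {a : ℕ → ℂ} {z : ℂ}

lemma Subord.exists_norm_le {f g : ℂ → ℂ} (hfg : Subord f g) :
    ∃ w : ℂ → ℂ, ContinuousOn w unitDisk ∧ (∀ z ∈ unitDisk, ‖w z‖ ≤ ‖z‖) ∧
      ∀ z ∈ unitDisk, f z = g (w z) := by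
  obtain ⟨w, hw, hw0, hw1, hfgw⟩ := hfg
  refine ⟨w, hw.continuousOn, fun z hz => ?_, hfgw⟩
  exact norm_le_norm_of_mapsTo_ball hw.differentiableOn
    (fun y hy => mem_closedBall_zero_iff.2 (hw1 y hy).le) hw0 (mem_ball_zero_iff.1 hz)

lemma Jfun_struveOp (ha : InA a) (hz : z ∈ unitDisk) :
    Jfun α lam μ (struveOp k c a) (struveOp (k + 1) c a) z =
      exp (α * I) * ((struveQuot (k + 1) c a z)⁻¹ ^ (μ : ℂ) *
        (1 + lam - lam * (struveQuot k c a z / struveQuot (k + 1) c a z))) := by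
  rw [Jfun, ratioPow_struveOp ha _ _ _ hz, ratioQ_struveOp ha _ _ _ hz]
  ring

/-- Subordination makes `Jfun` continuous, so `struveQuot⁻¹` cannot cross the cut of the principal
branch, where `Jfun` would jump. -/
lemma inv_struveQuot_mem_slitPlane_or_int (ha : InA a)
    (hnv : Nonvan (struveOp (k + 1) c a))
    (hJ : ContinuousOn (Jfun α lam μ (struveOp k c a) (struveOp (k + 1) c a)) unitDisk)
    (hz : z ∈ unitDisk) :
    (struveQuot (k + 1) c a z)⁻¹ ∈ slitPlane ∨ ∃ n : ℤ, (μ : ℂ) = n := by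
  refine or_iff_not_imp_right.2 fun hμ => ?_
  have hopen : IsOpen unitDisk := isOpen_ball
  have hne (y : ℂ) (hy : y ∈ unitDisk) := struveQuot_ne_zero ha hnv hy
  have hk := differentiableOn_struveQuot ha k c
  have hk1 := differentiableOn_struveQuot ha (k + 1) c
  refine mem_slitPlane_of_continuousOn_cpow_mul
    (h := fun y => (struveQuot (k + 1) c a y)⁻¹)
    (G := fun y => 1 + lam - lam * (struveQuot k c a y / struveQuot (k + 1) c a y))
    (not_exists.1 hμ) hopen (convex_ball 0 1).isPreconnected
    ((hk1.fun_inv hne).analyticOnNhd hopen)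
    (((hk.fun_div hk1 hne).const_mul lam).const_sub (1 + lam) |>.analyticOnNhd hopen)
    (fun y hy => inv_ne_zero (hne y hy)) (mem_ball_self one_pos)
    (by simp [struveQuot_zero ha]) (by simp [struveQuot_zero ha]) ?_ hz
  refine (hJ.const_smul (exp (α * I))⁻¹).congr fun y hy => ?_
  rw [Pi.smul_apply, smul_eq_mul, Jfun_struveOp ha hy, inv_mul_cancel_left₀ (exp_ne_zero _)]

theorem exists_solvesEulerOn_of_memN {γ : ℝ} (hα : Real.cos α ≠ 0) (hk : NotNonposInt k)
    (hγ : γ * lam = μ * k) (ha : InA a) (hnv : Nonvan (struveOp (k + 1) c a))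
    (hφ : ContinuousOn φ unitDisk) (hmem : memN α lam μ k c φ a) :
    ∃ w : ℂ → ℂ, (∀ z ∈ unitDisk, ‖w z‖ ≤ ‖z‖) ∧
      SolvesEulerOn (γ : ℂ)
        (fun z => (exp (α * I) * ratioPow μ (struveOp (k + 1) c a) z - (Real.sin α : ℂ) * I) /
          (Real.cos α : ℂ))
        (fun z => φ (w z)) unitDisk := by
  obtain ⟨w, hw, hwz, hJ⟩ := hmem.exists_norm_le
  have hwmem : MapsTo w unitDisk unitDisk := fun z hz =>
    mem_ball_zero_iff.2 ((hwz z hz).trans_lt (mem_ball_zero_iff.1 hz))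
  have hJcont : ContinuousOn (Jfun α lam μ (struveOp k c a) (struveOp (k + 1) c a)) unitDisk :=
    (((hφ.comp hw hwmem).const_smul (Real.cos α : ℂ)).add continuousOn_const).congr hJ
  have hcos : (Real.cos α : ℂ) ≠ 0 := ofReal_ne_zero.2 hα
  have hsol := ((solvesEulerOn_struveQuot ha hk c).inv_cpow
    (fun z hz => struveQuot_ne_zero ha hnv hz)
    (fun z hz => inv_struveQuot_mem_slitPlane_or_int ha hnv hJcont hz) hγ).const_mul_add_const
      (exp (α * I) / Real.cos α) (-(Real.sin α * I) / Real.cos α)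
  refine ⟨w, hwz, (hsol.congr_right fun z hz => ?_).congr_left isOpen_ball fun z hz => ?_⟩
  · have hJz := hJ z hz
    rw [Jfun_struveOp ha hz] at hJz
    rw [div_mul_eq_mul_div, hJz]
    field_simp
    ring
  · rw [ratioPow_struveOp ha _ _ _ hz]
    ring

end StruveClass

theorem modulus_bounds_general {μ α A B γ : ℝ} {k lam c : ℂ} {a : ℕ → ℂ}
    (hα : Real.cos α ≠ 0) (hB : |B| ≤ 1) (hBA : B ≤ A) (hAB : A * B ≤ 1)
    (hk : NotNonposInt k) (hγ : 0 < γ) (hγk : γ * lam = μ * k)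
    (ha : InA a) (hnv : Nonvan (struveOp (k + 1) c a))
    (hmem : memN α lam μ k c (janowski (A : ℂ) B) a) {z : ℂ} (hz : z ∈ unitDisk) :
    janowskiExtremal A B γ (-‖z‖) ≤
        ((exp (α * I) * ratioPow μ (struveOp (k + 1) c a) z - (Real.sin α : ℂ) * I) /
          (Real.cos α : ℂ)).re ∧
      ‖(exp (α * I) * ratioPow μ (struveOp (k + 1) c a) z - (Real.sin α : ℂ) * I) /
          (Real.cos α : ℂ)‖ ≤ janowskiExtremal A B γ ‖z‖ := by
  obtain ⟨w, hw, hsol⟩ :=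
    exists_solvesEulerOn_of_memN hα hk hγk ha hnv (continuousOn_janowski hB) hmem
  have hz1 : ‖z‖ < 1 := mem_ball_zero_iff.1 hz
  have hext := solvesEulerOn_janowskiExtremal A hγ hB
  have hext_neg := (hext.comp_const_mul (-1)).mono (t := Icc 0 ‖z‖) fun x hx =>
    ⟨by linarith [hx.2], by linarith [hx.1]⟩
  simp only [neg_one_mul] at hext_neg
  constructor
  · exact hsol.le_re_apply hγ hz hext_neg fun y hy =>
      janowski_neg_norm_le_re hB hBA (mem_ball_zero_iff.1 hy) (hw y hy)
  · refine hsol.norm_apply_le hγ hz (hext.mono fun x hx => ?_) fun y hy =>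
      norm_janowski_le hB hBA hAB (mem_ball_zero_iff.1 hy) (hw y hy)
    exact ⟨by linarith [hx.1], hx.2.trans_lt hz1⟩

/-- if `f ∈ N_{k,c}^α(λ, μ, (1+Az)/(1+Bz))` with `k, λ` real and
`μk/λ > 0`, then for `|z| = r < 1`,
`L(r) ≤ |(1/cos α){e^{iα}(z/S_{k+1}^c f(z))^μ - i sin α}| ≤ U(r)`. -/
theorem modulus_bounds (μ α A B k lam : ℝ) (c : ℂ) (a : ℕ → ℂ)
    (hμ0 : 0 < μ) (hμ1 : μ < 1) (hα : |α| < Real.pi / 2)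
    (hB : -1 ≤ B) (hBA : B < A) (hA : A ≤ 1)
    (hknp : NotNonposInt (k : ℂ)) (hlam : lam ≠ 0) (hpos : 0 < μ * k / lam)
    (ha : InA a)
    (hnv : Nonvan (struveOp (k : ℂ) c a)) (hnv1 : Nonvan (struveOp ((k : ℂ) + 1) c a))
    (hmem : memN α (lam : ℂ) μ (k : ℂ) c
      (fun z => (1 + (A : ℂ) * z) / (1 + (B : ℂ) * z)) a) :
    ∀ z ∈ unitDisk,
      lowerBdR A B μ k lam ‖z‖
          ≤ ‖(exp (α * I) * ratioPow μ (struveOp ((k : ℂ) + 1) c a) z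
              - (Real.sin α : ℂ) * I) / (Real.cos α : ℂ)‖ ∧
        ‖(exp (α * I) * ratioPow μ (struveOp ((k : ℂ) + 1) c a) z
              - (Real.sin α : ℂ) * I) / (Real.cos α : ℂ)‖
          ≤ upperBdR A B μ k lam ‖z‖ := by
  intro z hz
  have hz1 : ‖z‖ ≤ 1 := (mem_ball_zero_iff.1 hz).le
  have hγk : ((μ * k / lam : ℝ) : ℂ) * lam = μ * k := by exact_mod_cast div_mul_cancel₀ _ hlam
  obtain ⟨hlower, hupper⟩ := modulus_bounds_general
    (Real.cos_pos_of_mem_Ioo (abs_lt.1 hα)).ne' (abs_le.2 ⟨hB, hBA.le.trans hA⟩) hBA.le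
    (by nlinarith) hknp hpos hγk ha hnv1 hmem hz
  exact ⟨(lowerBdR_le_janowskiExtremal hBA.le hpos hz1).trans (hlower.trans (re_le_norm _)),
    hupper.trans (janowskiExtremal_le_upperBdR hBA.le hpos hz1)⟩
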